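/- arXiv:2201.02345 — 4 statements merged into one kernel-verified Lean document; each statement's English description precedes it below -/
import Mathlib

section
/- For X ∈ M_n(F_q) let d_i(X) be the number of matrices Z ∈ M_n(F_q) with [Z] ⊊ [X], and d_o(X) the number of matrices Z ∈ M_n(F_q) with [X] ⊊ [Z]. If rank(X) < rank(Y) then d_i(X) < d_i(Y) and d_o(X) > d_o(Y). Moreover, d_i(X) = d_i(Y) if and only if rank(X) = rank(Y), and d_o(X) = d_o(Y) if and only if rank(X) = rank(Y). -/
/-- The left ideal of `M_n(F)` generated by `X`: the set of all `C * X`. -/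
def leftIdeal {n : ℕ} {F : Type*} [Field F]
    (X : Matrix (Fin n) (Fin n) F) : Set (Matrix (Fin n) (Fin n) F) :=
  {A | ∃ C : Matrix (Fin n) (Fin n) F, A = C * X}

/-- In-degree of `X` in the left-ideal relation digraph: the number of `Z` with
`[Z] ⊊ [X]`. -/
noncomputable def inDeg {n : ℕ} {F : Type*} [Field F] [Fintype F]
    (X : Matrix (Fin n) (Fin n) F) : ℕ :=
  Nat.card {Z : Matrix (Fin n) (Fin n) F | leftIdeal Z ⊂ leftIdeal X}

/-- Out-degree of `X` in the left-ideal relation digraph: the number of `Z` with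
`[X] ⊊ [Z]`. -/
noncomputable def outDeg {n : ℕ} {F : Type*} [Field F] [Fintype F]
    (X : Matrix (Fin n) (Fin n) F) : ℕ :=
  Nat.card {Z : Matrix (Fin n) (Fin n) F | leftIdeal X ⊂ leftIdeal Z}

theorem aux_factor {n : ℕ} {F : Type*} [Field F]
    (A B : Matrix (Fin n) (Fin n) F) (h : A.rank ≤ B.rank) :
    ∃ G G' C : Matrix (Fin n) (Fin n) F, G * G' = 1 ∧ G * A = B * C := by
  have h1 : Module.rank F (LinearMap.range A.mulVecLin) ≤
      Module.rank F (LinearMap.range B.mulVecLin) := by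
    rw [← Module.finrank_eq_rank, ← Module.finrank_eq_rank]
    exact_mod_cast h
  obtain ⟨j, hj⟩ := rank_le_iff_exists_linearMap.1 h1
  let k := (LinearMap.range B.mulVecLin).subtype ∘ₗ j
  have hk : Function.Injective k := Subtype.val_injective.comp hj
  obtain ⟨g, hg⟩ := Submodule.exists_linearEquiv_restrict_eq (LinearEquiv.ofInjective k hk)
  have hr : ∀ v : Fin n → F, ∃ w, B.mulVec w = g (A.mulVec v) := by
    intro v
    have h2 := hg ⟨A.mulVec v, ⟨v, rfl⟩⟩
    obtain ⟨w, hw⟩ := (j ⟨A.mulVec v, ⟨v, rfl⟩⟩).2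
    refine ⟨w, ?_⟩
    rw [← h2]
    exact hw
  choose c hc using hr
  refine ⟨LinearMap.toMatrix' g.toLinearMap, LinearMap.toMatrix' g.symm.toLinearMap,
    Matrix.of fun i k => c (Pi.single k 1) i, ?_, ?_⟩
  · rw [← LinearMap.toMatrix'_comp]
    simp
  · apply Matrix.ext_of_mulVec_single
    intro k
    rw [← Matrix.mulVec_mulVec, ← Matrix.mulVec_mulVec, LinearMap.toMatrix'_mulVec]
    have : (Matrix.of fun i k => c (Pi.single k 1) i).mulVec (Pi.single k 1)
        = c (Pi.single k 1) := by
      ext i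
      simp
    rw [this, hc]
    rfl

theorem leftIdeal_subset_iff {n : ℕ} {F : Type*} [Field F]
    (X Y : Matrix (Fin n) (Fin n) F) :
    leftIdeal X ⊆ leftIdeal Y ↔ ∃ C, X = C * Y := by
  constructor
  · intro h
    exact h ⟨1, by simp⟩
  · rintro ⟨C, rfl⟩ A ⟨D, rfl⟩
    exact ⟨D * C, by rw [Matrix.mul_assoc]⟩

theorem leftIdeal_mul_subset {n : ℕ} {F : Type*} [Field F]
    (X Y Q Q' : Matrix (Fin n) (Fin n) F) (hQ : Q * Q' = 1) :
    leftIdeal (X * Q) ⊆ leftIdeal (Y * Q) ↔ leftIdeal X ⊆ leftIdeal Y := by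
  rw [leftIdeal_subset_iff, leftIdeal_subset_iff]
  refine exists_congr fun C => ⟨fun h => ?_, fun h => by rw [h, Matrix.mul_assoc]⟩
  have := congrArg (· * Q') h
  simpa [Matrix.mul_assoc, hQ] using this

theorem leftIdeal_mul_ssubset {n : ℕ} {F : Type*} [Field F]
    (X Y Q Q' : Matrix (Fin n) (Fin n) F) (hQ : Q * Q' = 1) :
    leftIdeal (X * Q) ⊂ leftIdeal (Y * Q) ↔ leftIdeal X ⊂ leftIdeal Y := by
  rw [ssubset_iff_subset_not_subset, ssubset_iff_subset_not_subset,
    leftIdeal_mul_subset _ _ _ _ hQ, leftIdeal_mul_subset _ _ _ _ hQ]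

/-- Right multiplication by an invertible matrix as a permutation. -/
def mulRightPerm {n : ℕ} {F : Type*} [Field F]
    (Q Q' : Matrix (Fin n) (Fin n) F) (hQ : Q * Q' = 1) :
    Matrix (Fin n) (Fin n) F ≃ Matrix (Fin n) (Fin n) F where
  toFun Z := Z * Q
  invFun Z := Z * Q'
  left_inv Z := by simp [Matrix.mul_assoc, hQ]
  right_inv Z := by simp [Matrix.mul_assoc, mul_eq_one_comm.1 hQ]

theorem inDeg_mul {n : ℕ} {F : Type*} [Field F] [Fintype F]
    (X Q Q' : Matrix (Fin n) (Fin n) F) (hQ : Q * Q' = 1) : inDeg (X * Q) = inDeg X :=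
  (Nat.card_congr ((mulRightPerm Q Q' hQ).subtypeEquiv fun Z =>
    (leftIdeal_mul_ssubset Z X Q Q' hQ).symm)).symm

theorem outDeg_mul {n : ℕ} {F : Type*} [Field F] [Fintype F]
    (X Q Q' : Matrix (Fin n) (Fin n) F) (hQ : Q * Q' = 1) : outDeg (X * Q) = outDeg X :=
  (Nat.card_congr ((mulRightPerm Q Q' hQ).subtypeEquiv fun Z =>
    (leftIdeal_mul_ssubset X Z Q Q' hQ).symm)).symm

theorem aux_exists {n : ℕ} {F : Type*} [Field F] [Fintype F]
    (X Y : Matrix (Fin n) (Fin n) F) (h : X.rank ≤ Y.rank) :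
    ∃ X' : Matrix (Fin n) (Fin n) F, inDeg X' = inDeg X ∧ outDeg X' = outDeg X ∧
      X'.rank ≤ X.rank ∧ leftIdeal X' ⊆ leftIdeal Y := by
  obtain ⟨G, G', C, hG, hC⟩ := aux_factor X.transpose Y.transpose
    (by rwa [Matrix.rank_transpose, Matrix.rank_transpose])
  have hQ : G.transpose * G'.transpose = 1 := by
    rw [← Matrix.transpose_mul, mul_eq_one_comm.1 hG, Matrix.transpose_one]
  refine ⟨X * G.transpose, inDeg_mul _ _ _ hQ, outDeg_mul _ _ _ hQ,
    Matrix.rank_mul_le_left _ _, ?_⟩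
  rw [leftIdeal_subset_iff]
  refine ⟨C.transpose, ?_⟩
  have := congrArg Matrix.transpose hC
  simpa [Matrix.transpose_mul] using this

theorem aux_le {n : ℕ} {F : Type*} [Field F] [Fintype F]
    (X Y : Matrix (Fin n) (Fin n) F) (h : X.rank ≤ Y.rank) :
    inDeg X ≤ inDeg Y ∧ outDeg Y ≤ outDeg X := by
  obtain ⟨X', h1, h2, -, h4⟩ := aux_exists X Y h
  rw [← h1, ← h2]
  exact ⟨Nat.card_mono (Set.toFinite _) fun Z hZ => lt_of_lt_of_le (α := Set _) hZ h4,
    Nat.card_mono (Set.toFinite _) fun Z hZ => lt_of_le_of_lt (α := Set _) h4 hZ⟩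

theorem aux_lt {n : ℕ} {F : Type*} [Field F] [Fintype F]
    (X Y : Matrix (Fin n) (Fin n) F) (h : X.rank < Y.rank) :
    inDeg X < inDeg Y ∧ outDeg Y < outDeg X := by
  obtain ⟨X', h1, h2, h3, h4⟩ := aux_exists X Y h.le
  have h5 : leftIdeal X' ⊂ leftIdeal Y := by
    refine ⟨h4, fun h6 => ?_⟩
    obtain ⟨C, hC⟩ := (leftIdeal_subset_iff _ _).1 h6
    have := Matrix.rank_mul_le_right C X'
    rw [← hC] at this
    omega
  rw [← h1, ← h2]
  unfold inDeg outDeg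
  rw [Nat.card_coe_set_eq, Nat.card_coe_set_eq, Nat.card_coe_set_eq, Nat.card_coe_set_eq]
  constructor
  · refine Set.ncard_lt_ncard ⟨fun Z hZ => lt_of_lt_of_le (α := Set _) hZ h4, fun hh => ?_⟩
      (Set.toFinite _)
    exact lt_irrefl (α := Set _) _ (hh h5)
  · refine Set.ncard_lt_ncard ⟨fun Z hZ => lt_of_le_of_lt (α := Set _) h4 hZ, fun hh => ?_⟩
      (Set.toFinite _)
    exact lt_irrefl (α := Set _) _ (hh h5)

/-- Lower rank gives strictly smaller in-degree and strictly larger out-degree;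
moreover in-degrees (resp. out-degrees) agree exactly when ranks agree. -/
theorem stmt_8 {n : ℕ} {F : Type*} [Field F] [Fintype F]
    (X Y : Matrix (Fin n) (Fin n) F) :
    (X.rank < Y.rank → inDeg X < inDeg Y ∧ outDeg X > outDeg Y) ∧
    (inDeg X = inDeg Y ↔ X.rank = Y.rank) ∧
    (outDeg X = outDeg Y ↔ X.rank = Y.rank) := by
  refine ⟨fun h => aux_lt X Y h, ⟨fun h => ?_, fun h => ?_⟩, ⟨fun h => ?_, fun h => ?_⟩⟩
  · rcases lt_trichotomy X.rank Y.rank with h' | h' | h'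
    · exact absurd h (aux_lt X Y h').1.ne
    · exact h'
    · exact absurd h (aux_lt Y X h').1.ne'
  · exact le_antisymm (aux_le X Y h.le).1 (aux_le Y X h.ge).1
  · rcases lt_trichotomy X.rank Y.rank with h' | h' | h'
    · exact absurd h (aux_lt X Y h').2.ne'
    · exact h'
    · exact absurd h (aux_lt Y X h').2.ne
  · exact le_antisymm (aux_le Y X h.ge).2 (aux_le X Y h.le).2
end

section
/- Let n ≥ 3 and let Ψ be an automorphism of the left-ideal relation digraph of M_n(F_q). Then there exists an invertible matrix P ∈ M_n(F_q) such that [Ψ(E_{e_1})·P] = [E_{e_1}]. -/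
/-- `Ee k` is the matrix whose first row is the `k`-th standard basis vector of
`F^n` and whose other rows are zero. -/
def Ee {n : ℕ} (F : Type*) [Field F] (k : Fin n) : Matrix (Fin n) (Fin n) F :=
  Matrix.of fun i j => if (i : ℕ) = 0 ∧ j = k then 1 else 0

theorem aux_li_subset {n : ℕ} {F : Type*} [Field F] {X Y : Matrix (Fin n) (Fin n) F}
    (C : Matrix (Fin n) (Fin n) F) (h : X = C * Y) : leftIdeal X ⊆ leftIdeal Y := by
  rintro A ⟨D, rfl⟩
  exact ⟨D * C, by rw [h, Matrix.mul_assoc]⟩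

theorem aux_li_self {n : ℕ} {F : Type*} [Field F] (X : Matrix (Fin n) (Fin n) F) :
    X ∈ leftIdeal X := ⟨1, by simp⟩

theorem aux_zero_ssubset {n : ℕ} {F : Type*} [Field F] {X : Matrix (Fin n) (Fin n) F} :
    leftIdeal 0 ⊂ leftIdeal X ↔ X ≠ 0 := by
  constructor
  · rintro h rfl
    exact h.2 h.1
  · intro h
    refine ⟨aux_li_subset 0 (by simp), fun h' => h ?_⟩
    obtain ⟨C, hC⟩ := h' (aux_li_self X)
    simpa using hC

theorem aux_not_ssubset_zero {n : ℕ} {F : Type*} [Field F] {X : Matrix (Fin n) (Fin n) F} :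
    ¬ leftIdeal X ⊂ leftIdeal 0 := by
  intro h
  exact h.2 (aux_li_subset 0 (by simp))

theorem aux_E_min {n : ℕ} {F : Type*} [Field F] (o : Fin n) (ho : (o : ℕ) = 0)
    {X : Matrix (Fin n) (Fin n) F}
    (h : leftIdeal X ⊂ leftIdeal (Ee F o)) : X = 0 := by
  by_contra hX
  obtain ⟨C, hC⟩ := h.1 (aux_li_self X)
  have hE : ∀ i j, X i j = if j = o then C i o else 0 := by
    intro i j
    rw [hC, Matrix.mul_apply, Finset.sum_eq_single o]
    · simp [Ee, ho]
    · intro b _ hb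
      have : (b : ℕ) ≠ 0 := fun h => hb (Fin.ext (h.trans ho.symm))
      simp [Ee, this]
    · simp
  obtain ⟨i, hi⟩ : ∃ i, C i o ≠ 0 := by
    by_contra! hc
    exact hX (by ext i j; simp [hE, hc])
  apply h.2
  refine aux_li_subset (Matrix.single o i (C i o)⁻¹) ?_
  ext a b
  by_cases ha : a = o
  · subst ha
    rw [Matrix.single_mul_apply_same, hE]
    by_cases hb : b = a <;> simp [Ee, ho, hb, hi]
  · rw [Matrix.single_mul_apply_of_ne _ _ _ _ _ ha]
    have : (a : ℕ) ≠ 0 := fun h => ha (Fin.ext (h.trans ho.symm))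
    simp [Ee, this]

theorem aux_exists_P {n : ℕ} {F : Type*} [Field F] (o : Fin n) (z : Fin n → F) (hz : z ≠ 0) :
    ∃ P : Matrix (Fin n) (Fin n) F, IsUnit P ∧ Matrix.vecMul z P = Pi.single o 1 := by
  let e := LinearEquiv.toSpanNonzeroSingleton F (Fin n → F) z hz
  have he0 : (Pi.single o 1 : Fin n → F) ≠ 0 := by simp
  let e' := LinearEquiv.toSpanNonzeroSingleton F (Fin n → F) (Pi.single o 1) he0
  obtain ⟨g, hg⟩ := Submodule.exists_linearEquiv_restrict_eq (e.symm.trans e')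
  refine ⟨(LinearMap.toMatrix' g.toLinearMap).transpose, ?_, ?_⟩
  · rw [Matrix.isUnit_transpose, LinearMap.isUnit_toMatrix'_iff, Module.End.isUnit_iff]
    exact g.bijective
  · rw [Matrix.vecMul_transpose, LinearMap.toMatrix'_mulVec]
    have h1 := hg (e 1)
    have h2 : ((e 1 : (F ∙ z)) : Fin n → F) = z := by simp [e]
    rw [h2] at h1
    simp only [LinearEquiv.coe_coe]
    rw [← h1]
    simp [e']

theorem stmt_12 {n : ℕ} (hn : 3 ≤ n) {F : Type*} [Field F] [Fintype F]
    (Ψ : Matrix (Fin n) (Fin n) F → Matrix (Fin n) (Fin n) F)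
    (hbij : Function.Bijective Ψ)
    (hedge : ∀ X Y : Matrix (Fin n) (Fin n) F,
      leftIdeal X ⊂ leftIdeal Y ↔ leftIdeal (Ψ X) ⊂ leftIdeal (Ψ Y)) :
    ∃ P : Matrix (Fin n) (Fin n) F, IsUnit P ∧
      leftIdeal (Ψ (Ee F (⟨0, by omega⟩ : Fin n)) * P) =
        leftIdeal (Ee F (⟨0, by omega⟩ : Fin n)) := by
  set o : Fin n := ⟨0, by omega⟩ with ho
  set Z := Ψ (Ee F o) with hZ
  have hE0 : Ee F o ≠ 0 := by
    intro h
    have := congrFun (congrFun h o) o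
    simp [Ee, ho] at this
  have hZ0 : Z ≠ 0 := by
    intro h
    have h1 := (hedge _ _).1 (aux_zero_ssubset.2 hE0)
    rw [← hZ, h] at h1
    exact aux_not_ssubset_zero h1
  have hmin : ∀ W, leftIdeal W ⊂ leftIdeal Z → W = 0 := by
    intro W hW
    obtain ⟨X, rfl⟩ := hbij.2 W
    have hX : X = 0 := aux_E_min o rfl ((hedge _ _).2 hW)
    by_contra hne
    obtain ⟨Y, hY⟩ := hbij.2 0
    have h1 := aux_zero_ssubset.2 hne
    rw [← hY] at h1
    have h2 := (hedge _ _).2 h1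
    rw [hX] at h2
    exact aux_not_ssubset_zero h2
  obtain ⟨i, hi⟩ : ∃ i, Z i ≠ 0 := by
    by_contra! hc
    exact hZ0 (by ext i j; simp [hc])
  obtain ⟨P, hP, hzP⟩ := aux_exists_P o (Z i) hi
  refine ⟨P, hP, ?_⟩
  set W := Matrix.single o i (1 : F) * Z with hW
  have hWE : W * P = Ee F o := by
    ext a b
    rw [hW, Matrix.mul_assoc]
    by_cases ha : a = o
    · subst ha
      rw [Matrix.single_mul_apply_same, one_mul]
      have : (Z * P) i b = Matrix.vecMul (Z i) P b := rfl
      rw [this, hzP]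
      simp [Ee, ho, Pi.single_apply]
    · rw [Matrix.single_mul_apply_of_ne _ _ _ _ _ ha]
      have : (a : ℕ) ≠ 0 := fun h => ha (Fin.ext h)
      simp [Ee, this]
  have hW0 : W ≠ 0 := by
    intro h
    rw [h, Matrix.zero_mul] at hWE
    exact hE0 hWE.symm
  have hsub : leftIdeal Z ⊆ leftIdeal W := by
    by_contra hc
    exact hW0 (hmin W ⟨aux_li_subset _ hW, hc⟩)
  obtain ⟨C, hC⟩ := hsub (aux_li_self Z)
  apply Set.Subset.antisymm
  · refine aux_li_subset C ?_
    rw [← hWE, ← Matrix.mul_assoc, ← hC]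
  · refine aux_li_subset (Matrix.single o i (1 : F)) ?_
    rw [← hWE, hW, Matrix.mul_assoc]
end

section
/- Let n ≥ 3 and let Ψ be an automorphism of the left-ideal relation digraph of M_n(F_q). Then there exists a single invertible matrix P ∈ M_n(F_q) such that [Ψ(E_{e_k})·P] = [E_{e_k}] simultaneously for every k with 1 ≤ k ≤ n. -/
/-- Row space of a matrix. -/
def rsp {n : ℕ} {F : Type*} [Field F] (X : Matrix (Fin n) (Fin n) F) :
    Submodule F (Fin n → F) := LinearMap.range (Matrix.vecMulLinear X)

theorem mem_rsp {n : ℕ} {F : Type*} [Field F] (X : Matrix (Fin n) (Fin n) F) (w : Fin n → F) :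
    w ∈ rsp X ↔ ∃ v, Matrix.vecMul v X = w := by
  simp [rsp]

theorem le_iff_rsp {n : ℕ} {F : Type*} [Field F] (X Y : Matrix (Fin n) (Fin n) F) :
    leftIdeal X ⊆ leftIdeal Y ↔ rsp X ≤ rsp Y := by
  constructor
  · intro h w hw
    obtain ⟨C, hC⟩ := h ⟨1, (one_mul X).symm⟩
    obtain ⟨v, rfl⟩ := (mem_rsp _ _).1 hw
    refine (mem_rsp _ _).2 ⟨Matrix.vecMul v C, ?_⟩
    rw [Matrix.vecMul_vecMul, ← hC]
  · intro h
    have h1 : ∀ i, ∃ c, Matrix.vecMul c Y = X i := by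
      intro i
      refine (mem_rsp _ _).1 (h ((mem_rsp _ _).2 ⟨Pi.single i 1, ?_⟩))
      rw [Matrix.single_one_vecMul]; rfl
    choose C hC using h1
    have hX : X = Matrix.of C * Y := by
      ext i j
      rw [← hC i]; rfl
    rintro A ⟨D, rfl⟩
    refine ⟨D * Matrix.of C, ?_⟩
    rw [mul_assoc, ← hX]

theorem lt_iff_rsp {n : ℕ} {F : Type*} [Field F] (X Y : Matrix (Fin n) (Fin n) F) :
    leftIdeal X ⊂ leftIdeal Y ↔ rsp X < rsp Y := by
  rw [lt_iff_le_not_ge, lt_iff_le_not_ge]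
  exact and_congr (le_iff_rsp X Y) (not_congr (le_iff_rsp Y X))

theorem eq_of_rsp {n : ℕ} {F : Type*} [Field F] (X Y : Matrix (Fin n) (Fin n) F)
    (h : rsp X = rsp Y) : leftIdeal X = leftIdeal Y :=
  Set.Subset.antisymm ((le_iff_rsp _ _).2 h.le) ((le_iff_rsp _ _).2 h.ge)

theorem exists_rsp {n : ℕ} {F : Type*} [Field F] (V : Submodule F (Fin n → F)) :
    ∃ X : Matrix (Fin n) (Fin n) F, rsp X = V := by
  obtain ⟨W, hW⟩ := Submodule.exists_isCompl V
  let f : (Fin n → F) →ₗ[F] (Fin n → F) := V.subtype ∘ₗ V.projectionOnto W hW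
  refine ⟨LinearMap.toMatrixRight' f, ?_⟩
  have h2 : ∀ v, Matrix.vecMul v (LinearMap.toMatrixRight' f) = f v := by
    intro v
    exact LinearMap.congr_fun (LinearMap.toMatrixRight'.symm_apply_apply f) v
  ext w
  rw [mem_rsp]
  simp only [h2]
  constructor
  · rintro ⟨v, rfl⟩
    exact (V.projectionOnto W hW v).2
  · intro hw
    refine ⟨w, ?_⟩
    have := Submodule.projectionOnto_apply_left hW ⟨w, hw⟩
    simp only [f, LinearMap.comp_apply]
    rw [this]; rfl

theorem rsp_Ee {n : ℕ} (hn : 0 < n) {F : Type*} [Field F] (k : Fin n) :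
    rsp (Ee F k) = Submodule.span F {Pi.single k 1} := by
  have key : ∀ v : Fin n → F, Matrix.vecMul v (Ee F k) = v ⟨0, hn⟩ • Pi.single k 1 := by
    intro v
    ext j
    simp only [Matrix.vecMul, dotProduct, Ee, Matrix.of_apply, Pi.smul_apply, smul_eq_mul]
    rw [Finset.sum_eq_single ⟨0, hn⟩]
    · simp [Pi.single_apply]
    · intro b _ hb
      have : (b : ℕ) ≠ 0 := fun h => hb (Fin.ext h)
      simp [this]
    · simp
  ext w
  rw [mem_rsp, Submodule.mem_span_singleton]
  constructor
  · rintro ⟨v, rfl⟩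
    exact ⟨_, (key v).symm⟩
  · rintro ⟨a, rfl⟩
    exact ⟨fun _ => a, key _⟩

theorem stmt_14 {n : ℕ} (hn : 3 ≤ n) {F : Type*} [Field F] [Fintype F]
    (Ψ : Matrix (Fin n) (Fin n) F → Matrix (Fin n) (Fin n) F)
    (hbij : Function.Bijective Ψ)
    (hedge : ∀ X Y : Matrix (Fin n) (Fin n) F,
      leftIdeal X ⊂ leftIdeal Y ↔ leftIdeal (Ψ X) ⊂ leftIdeal (Ψ Y)) :
    ∃ P : Matrix (Fin n) (Fin n) F, IsUnit P ∧
      ∀ k : Fin n, leftIdeal (Ψ (Ee F k) * P) = leftIdeal (Ee F k) := by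
  simp only [lt_iff_rsp] at hedge
  have hex : ∀ V : Submodule F (Fin n → F), ∃ X, rsp (Ψ X) = V := by
    intro V
    obtain ⟨Y, hY⟩ := exists_rsp V
    obtain ⟨X, rfl⟩ := hbij.2 Y
    exact ⟨X, hY⟩
  have hE := fun k : Fin n => rsp_Ee (F := F) (by omega : 0 < n) k
  have hw : ∀ k, ∃ w : Fin n → F, rsp (Ψ (Ee F k)) = Submodule.span F {w} := by
    intro k
    by_cases h0 : rsp (Ψ (Ee F k)) = ⊥
    · exact ⟨0, by simp [h0]⟩
    obtain ⟨w, hwm, hw0⟩ := Submodule.exists_mem_ne_zero_of_ne_bot h0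
    refine ⟨w, ?_⟩
    by_contra hne
    have h1 : Submodule.span F {w} < rsp (Ψ (Ee F k)) :=
      lt_of_le_of_ne ((Submodule.span_singleton_le_iff_mem _ _).2 hwm) (Ne.symm hne)
    have h2 : (⊥ : Submodule F (Fin n → F)) < Submodule.span F {w} := by
      rw [bot_lt_iff_ne_bot]; simpa using hw0
    obtain ⟨A, hA⟩ := hex (Submodule.span F {w})
    obtain ⟨B, hB⟩ := hex ⊥
    rw [← hA] at h1 h2
    rw [← hB] at h2
    have h1 := Submodule.finrank_lt_finrank_of_lt ((hedge _ _).2 h1)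
    have h2 := Submodule.finrank_lt_finrank_of_lt ((hedge _ _).2 h2)
    have h3 := finrank_span_le_card (R := F) ({Pi.single k 1} : Set (Fin n → F))
    rw [← hE k] at h3
    simp at h3
    omega
  choose w hw using hw
  have htop : Submodule.span F (Set.range w) = ⊤ := by
    by_contra hne
    obtain ⟨H, hH, hle⟩ := (eq_top_or_exists_le_coatom (Submodule.span F (Set.range w))).resolve_left hne
    obtain ⟨Y, hY⟩ := hex H
    obtain ⟨Z, hZ⟩ := hex ⊤
    have hYZ : rsp Y < rsp Z := by
      rw [hedge, hY, hZ]; exact hH.lt_top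
    have hlt : ∀ k, rsp (Ee F k) < rsp Y := by
      intro k
      rw [hedge, hw, hY]
      refine lt_of_le_of_ne ?_ ?_
      · rw [Submodule.span_singleton_le_iff_mem]
        exact hle (Submodule.subset_span ⟨k, rfl⟩)
      · intro h
        obtain ⟨v, -, hv⟩ := SetLike.exists_of_lt hH.lt_top
        have h4 : Submodule.span F {w k} ⊔ Submodule.span F {v} = ⊤ := by
          rw [h]
          refine hH.2 _ (lt_of_le_of_ne le_sup_left fun h5 => hv ?_)
          rw [h5]
          exact Submodule.mem_sup_right (Submodule.mem_span_singleton_self v)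
        have h5 := Submodule.finrank_add_le_finrank_add_finrank
          (Submodule.span F {w k}) (Submodule.span F {v})
        rw [h4] at h5
        have h6 := finrank_span_le_card (R := F) ({w k} : Set (Fin n → F))
        have h7 := finrank_span_le_card (R := F) ({v} : Set (Fin n → F))
        simp at h5 h6 h7
        omega
    have : rsp Y = ⊤ := by
      rw [eq_top_iff]
      rintro x -
      rw [pi_eq_sum_univ' x]
      refine Submodule.sum_mem _ fun i _ => Submodule.smul_mem _ _ ?_
      refine (hlt i).le ?_
      rw [hE, Submodule.mem_span_singleton]
      refine ⟨1, ?_⟩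
      ext j
      simp [Pi.single_apply, eq_comm]
    rw [this] at hYZ
    exact not_top_lt hYZ
  have hli : LinearIndependent F w :=
    linearIndependent_of_top_le_span_of_card_eq_finrank htop.ge (by simp)
  have hu : IsUnit (Matrix.of w) := Matrix.linearIndependent_rows_iff_isUnit.1 hli
  obtain ⟨u, hu⟩ := hu
  refine ⟨↑u⁻¹, u⁻¹.isUnit, fun k => eq_of_rsp _ _ ?_⟩
  have hk : Matrix.vecMul (w k) (↑u⁻¹ : Matrix (Fin n) (Fin n) F) = Pi.single k 1 := by
    have h1 : w k = Matrix.vecMul (Pi.single k 1) (u : Matrix (Fin n) (Fin n) F) := by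
      rw [Matrix.single_one_vecMul, hu]; rfl
    rw [h1, Matrix.vecMul_vecMul, Units.mul_inv, Matrix.vecMul_one]
  have hm : rsp (Ψ (Ee F k) * (↑u⁻¹ : Matrix (Fin n) (Fin n) F)) =
      (rsp (Ψ (Ee F k))).map (Matrix.vecMulLinear (↑u⁻¹ : Matrix (Fin n) (Fin n) F)) := by
    ext x
    simp only [mem_rsp, Submodule.mem_map, Matrix.vecMulLinear_apply]
    constructor
    · rintro ⟨v, rfl⟩
      exact ⟨_, ⟨v, rfl⟩, by rw [Matrix.vecMul_vecMul]⟩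
    · rintro ⟨_, ⟨v, rfl⟩, rfl⟩
      exact ⟨v, by rw [Matrix.vecMul_vecMul]⟩
  rw [hm, hw, hE, Submodule.map_span, Set.image_singleton, Matrix.vecMulLinear_apply, hk]
end

section
/- Let n ≥ 3 and let Ψ be an automorphism of the left-ideal relation digraph of M_n(F_q). Then there exist an invertible matrix P ∈ M_n(F_q), a field automorphism τ of F_q, and a bijection σ of M_n(F_q) satisfying [σ(X)] = [X] for all X, such that Ψ(X) = (σ(X) entrywise-mapped by τ)·P for every X ∈ M_n(F_q). In particular, [Ψ(X)] = [(X entrywise-mapped by τ)·P] for every X ∈ M_n(F_q). -/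
open Submodule in
/-- Strict neighbourhoods determine a subspace in dimension at least three. -/
theorem aux_eq_of_nbhd {F V : Type*} [Field F] [AddCommGroup V] [Module F V]
    (h3 : ∀ x y : V, ∃ z, z ∉ span F {x, y}) (U W : Submodule F V)
    (hd : ∀ T, T < U ↔ T < W) (hu : ∀ T, U < T ↔ W < T) : U = W := by
  have key : ∀ U W : Submodule F V, (∀ T, T < U ↔ T < W) → (∀ T, U < T ↔ W < T) →
      (¬ ∃ x, U = span F {x}) → U = W := by
    intro U W hd hu hU
    have hle : U ≤ W := by
      intro x hx
      have h1 : span F {x} < U := by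
        refine lt_of_le_of_ne ?_ (fun h => hU ⟨x, h.symm⟩)
        simpa using hx
      exact ((hd _).1 h1).le (mem_span_singleton_self x)
    rcases hle.lt_or_eq with h | h
    · exact absurd ((hu _).1 h) (lt_irrefl _)
    · exact h
  by_cases hU : ∃ x, U = span F {x}
  swap
  · exact key U W hd hu hU
  by_cases hW : ∃ x, W = span F {x}
  swap
  · exact (key W U (fun T => (hd T).symm) (fun T => (hu T).symm) hW).symm
  obtain ⟨x, rfl⟩ := hU
  obtain ⟨y, rfl⟩ := hW
  obtain ⟨z, hz⟩ := h3 x y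
  have hlt : span F {x} < span F {x, z} := by
    refine lt_of_le_of_ne (span_mono (by simp)) (fun h => hz ?_)
    have : z ∈ span F {x} := by rw [h]; exact subset_span (by simp)
    exact span_mono (by simp) this
  have hy : y ∈ span F {x, z} := ((hu _).1 hlt).le (mem_span_singleton_self y)
  rw [mem_span_pair] at hy
  obtain ⟨a, b, hab⟩ := hy
  have hb : b = 0 := by
    by_contra hb
    apply hz
    rw [mem_span_pair]
    refine ⟨-(b⁻¹ * a), b⁻¹, ?_⟩
    rw [← hab, smul_add, smul_smul, smul_smul, inv_mul_cancel₀ hb]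
    module
  have hle : span F {y} ≤ span F {x} := by
    rw [span_singleton_le_iff_mem, mem_span_singleton]
    exact ⟨a, by simpa [hb] using hab⟩
  rcases hle.lt_or_eq with h | h
  · exact absurd ((hd _).1 h) (lt_irrefl _)
  · exact h.symm

open Submodule in
/-- Fundamental theorem of projective geometry. -/
theorem aux_ftpg {F V : Type*} [Field F] [AddCommGroup V] [Module F V]
    (φ : Submodule F V ≃o Submodule F V) (l : V →ₗ[F] F) (v0 e1 e2 : V)
    (hv0 : l v0 = 1) (he1 : l e1 = 0) (he2 : l e2 = 0) (he10 : e1 ≠ 0)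
    (he12 : e2 ∉ span F {e1}) :
    ∃ (f : V → V) (τ : F →+* F), (∀ x y, f (x + y) = f x + f y) ∧
      (∀ (c : F) x, f (c • x) = τ c • f x) ∧ ∀ x, φ (span F {x}) = span F {f x} := by
  have hv00 : v0 ≠ 0 := by rintro rfl; simp at hv0
  have hpt : ∀ v : V, v ≠ 0 → ∀ y ∈ φ (span F {v}), y ≠ 0 → φ (span F {v}) = span F {y} := by
    intro v hv y hy hy0
    have hat : IsAtom (φ (span F {v})) := (φ.isAtom_iff _).2 (nonzero_span_atom v hv)
    have hle : span F {y} ≤ φ (span F {v}) := by simpa using hy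
    rcases hat.le_iff.1 hle with h | h
    · simp [hy0] at h
    · exact h.symm
  have hex : ∀ v : V, v ≠ 0 → ∃ y, y ≠ 0 ∧ φ (span F {v}) = span F {y} := by
    intro v hv
    have hat : IsAtom (φ (span F {v})) := (φ.isAtom_iff _).2 (nonzero_span_atom v hv)
    obtain ⟨y, hy, hy0⟩ := (Submodule.ne_bot_iff _).1 hat.1
    exact ⟨y, hy0, hpt v hv y hy hy0⟩
  have hmemiff : ∀ v W, φ (span F {v}) ≤ φ W ↔ v ∈ W := by
    intro v W; rw [φ.le_iff_le]; simp
  set H := LinearMap.ker l with hH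
  have hHm : ∀ v, v ∈ H ↔ l v = 0 := fun v => LinearMap.mem_ker
  obtain ⟨w0, hw00, hw0⟩ := hex v0 hv00
  have hw0H : w0 ∉ φ H := by
    intro h
    have : φ (span F {v0}) ≤ φ H := by rw [hw0]; simpa using h
    rw [hmemiff, hHm, hv0] at this
    exact one_ne_zero this
  have hcoef : ∀ (a b : F) (y z : V), y ∈ φ H → z ∈ φ H → a • w0 + y = b • w0 + z →
      a = b ∧ y = z := by
    intro a b y z hy hz h
    have hab : a = b := by
      by_contra hab
      have h1 : (a - b) • w0 ∈ φ H := by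
        have : (a - b) • w0 = z - y := by
          rw [sub_smul, sub_eq_sub_iff_add_eq_add, h, add_comm]
        rw [this]; exact sub_mem hz hy
      exact hw0H (((φ H).smul_mem_iff (sub_ne_zero.2 hab)).1 h1)
    refine ⟨hab, ?_⟩
    subst hab
    exact add_left_cancel h
  have hg : ∀ v : V, ∃ y, v ∈ H → y ∈ φ (span F {v}) ∧ φ (span F {v0 + v}) = span F {w0 + y} := by
    intro v
    by_cases hv : v ∈ H
    swap
    · exact ⟨0, fun h => absurd h hv⟩
    have hl := (hHm v).1 hv
    have hne : v0 + v ≠ 0 := by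
      intro h
      have := congrArg l h
      simp [hv0, hl] at this
    obtain ⟨p, hp0, hp⟩ := hex _ hne
    have hle : φ (span F {v0 + v}) ≤ span F {w0} ⊔ φ (span F {v}) := by
      rw [← hw0, ← φ.map_sup, hmemiff]
      exact add_mem (mem_sup_left (mem_span_singleton_self _))
        (mem_sup_right (mem_span_singleton_self _))
    have hpm : p ∈ span F {w0} ⊔ φ (span F {v}) := by
      apply hle; rw [hp]; exact mem_span_singleton_self _
    obtain ⟨q, hq, y, hy, hqy⟩ := mem_sup.1 hpm
    obtain ⟨a, rfl⟩ := mem_span_singleton.1 hq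
    have ha : a ≠ 0 := by
      rintro rfl
      have h1 : φ (span F {v0 + v}) ≤ φ (span F {v}) := by
        rw [hp, span_singleton_le_iff_mem, ← hqy]; simpa using hy
      rw [hmemiff] at h1
      obtain ⟨c, hc⟩ := mem_span_singleton.1 h1
      have := congrArg l hc
      simp [hv0, hl] at this
    refine ⟨a⁻¹ • y, fun _ => ⟨smul_mem _ _ hy, ?_⟩⟩
    have : w0 + a⁻¹ • y = a⁻¹ • p := by
      rw [← hqy, smul_add, smul_smul, inv_mul_cancel₀ ha, one_smul]
    rw [hp, this, span_singleton_smul_eq (IsUnit.mk0 _ (inv_ne_zero ha))]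
  choose g hg using hg
  have hgH : ∀ v ∈ H, g v ∈ φ H := by
    intro v hv
    have : φ (span F {v}) ≤ φ H := (hmemiff _ _).2 hv
    exact this (hg v hv).1
  have hg0 : g 0 = 0 := by
    have := (hg 0 H.zero_mem).1
    simpa using this
  have hgne : ∀ v ∈ H, v ≠ 0 → g v ≠ 0 := by
    intro v hv hv' h
    have h1 := (hg v hv).2
    rw [h, add_zero, ← hw0] at h1
    have h2 := (hmemiff _ _).1 h1.le
    obtain ⟨c, hc⟩ := mem_span_singleton.1 h2
    have h3 := congrArg l hc
    simp [hv0, (hHm v).1 hv] at h3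
    subst h3
    simp at hc
    exact hv' hc
  have hgs : ∀ v ∈ H, φ (span F {v}) = span F {g v} := by
    intro v hv
    by_cases h : v = 0
    · subst h; simp [hg0]
    · exact hpt v h _ (hg v hv).1 (hgne v hv h)
  have hgind : ∀ u ∈ H, ∀ v ∈ H, v ∉ span F {u} → g v ∉ span F {g u} := by
    intro u hu v hv h h'
    apply h
    rw [← hmemiff, hgs u hu, hgs v hv]
    simpa using h'
  have hadd1 : ∀ u ∈ H, ∀ v ∈ H, u ≠ 0 → v ∉ span F {u} → g (u + v) = g u + g v := by
    intro u hu v hv hu0 hvu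
    have huv := H.add_mem hu hv
    have hA : ∀ u ∈ H, ∀ v ∈ H, ∃ b : F, g (u + v) = g u + b • g v := by
      intro u hu v hv
      have huv := H.add_mem hu hv
      have hle : φ (span F {v0 + (u + v)}) ≤ φ (span F {v0 + u} ⊔ span F {v}) := by
        rw [hmemiff, ← add_assoc]
        exact add_mem (mem_sup_left (mem_span_singleton_self _))
          (mem_sup_right (mem_span_singleton_self _))
      rw [φ.map_sup, (hg _ huv).2, (hg _ hu).2, hgs v hv, span_singleton_le_iff_mem] at hle
      obtain ⟨q, hq, y, hy, hqy⟩ := mem_sup.1 hle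
      obtain ⟨a, rfl⟩ := mem_span_singleton.1 hq
      obtain ⟨b, rfl⟩ := mem_span_singleton.1 hy
      have := hcoef a 1 (a • g u + b • g v) (g (u + v))
        (add_mem (smul_mem _ _ (hgH u hu)) (smul_mem _ _ (hgH v hv))) (hgH _ huv)
        (by rw [one_smul, ← hqy]; module)
      obtain ⟨rfl, h2⟩ := this
      exact ⟨b, by rw [← h2, one_smul]⟩
    obtain ⟨b, hb⟩ := hA u hu v hv
    obtain ⟨d, hd⟩ := hA v hv u hu
    rw [add_comm v u] at hd
    have hb1 : b = 1 := by
      by_contra hne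
      apply hgind u hu v hv hvu
      have : (b - 1) • g v = (d - 1) • g u := by
        have h := hb.symm.trans hd
        rw [sub_smul, sub_smul, one_smul, one_smul, sub_eq_sub_iff_add_eq_add, add_comm, h,
          add_comm]
      rw [mem_span_singleton]
      refine ⟨(b - 1)⁻¹ * (d - 1), ?_⟩
      rw [mul_smul, ← this, smul_smul, inv_mul_cancel₀ (sub_ne_zero.2 hne), one_smul]
    rw [hb, hb1, one_smul]
  have hthird : ∀ u ∈ H, u ≠ 0 → ∃ w ∈ H, w ∉ span F {u} := by
    intro u hu hu0
    by_cases h1 : e1 ∈ span F {u}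
    · refine ⟨e2, (hHm _).2 he2, fun h2 => he12 ?_⟩
      obtain ⟨a, rfl⟩ := mem_span_singleton.1 h1
      have ha : a ≠ 0 := by rintro rfl; simp at he10
      rwa [span_singleton_smul_eq (IsUnit.mk0 _ ha)]
    · exact ⟨e1, (hHm _).2 he1, h1⟩
  have hadd : ∀ u ∈ H, ∀ v ∈ H, g (u + v) = g u + g v := by
    intro u hu v hv
    by_cases hu0 : u = 0
    · subst hu0; simp [hg0]
    by_cases hvu : v ∈ span F {u}
    swap
    · exact hadd1 u hu v hv hu0 hvu
    by_cases hv0' : v = 0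
    · subst hv0'; simp [hg0]
    obtain ⟨w, hw, hwu⟩ := hthird u hu hu0
    have hwv : ∀ x ∈ span F {u}, w ∉ span F {x} := by
      intro x hx h
      exact hwu ((span_singleton_le_iff_mem _ _).2 hx h)
    have hus := mem_span_singleton_self (R := F) u
    have h1 : g (u + (v + w)) = g u + g (v + w) := by
      apply hadd1 u hu _ (H.add_mem hv hw) hu0
      intro h
      exact hwu ((Submodule.add_mem_iff_right _ hvu).1 h)
    have h2 : g (v + w) = g v + g w := hadd1 v hv w hw hv0' (hwv v hvu)
    have h3 : g ((u + v) + w) = g (u + v) + g w := by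
      by_cases h0 : u + v = 0
      · rw [h0]; simp [hg0]
      · exact hadd1 _ (H.add_mem hu hv) w hw h0 (hwv _ (add_mem hus hvu))
    rw [add_assoc, h1, h2, ← add_assoc] at h3
    exact (add_right_cancel h3).symm
  have hsc : ∀ v ∈ H, ∀ a : F, ∃ t : F, g (a • v) = t • g v := by
    intro v hv a
    have h1 : φ (span F {a • v}) ≤ φ (span F {v}) :=
      (hmemiff _ _).2 (smul_mem _ _ (mem_span_singleton_self _))
    rw [hgs _ (H.smul_mem a hv), hgs v hv, span_singleton_le_iff_mem, mem_span_singleton] at h1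
    obtain ⟨t, ht⟩ := h1
    exact ⟨t, ht.symm⟩
  have hsame : ∀ u ∈ H, ∀ v ∈ H, u ≠ 0 → v ∉ span F {u} → ∀ a t : F,
      g (a • u) = t • g u → g (a • v) = t • g v := by
    intro u hu v hv hu0 hvu a t ht
    obtain ⟨s, hs⟩ := hsc v hv a
    obtain ⟨r, hr⟩ := hsc (u + v) (H.add_mem hu hv) a
    rw [smul_add, hadd _ (H.smul_mem a hu) _ (H.smul_mem a hv), hadd u hu v hv, ht, hs] at hr
    have hrs : s = r := by
      by_contra hne
      apply hgind u hu v hv hvu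
      have h : (s - r) • g v = (r - t) • g u := by
        rw [sub_smul, sub_smul, sub_eq_sub_iff_add_eq_add, add_comm, hr, smul_add]
      rw [mem_span_singleton]
      refine ⟨(s - r)⁻¹ * (r - t), ?_⟩
      rw [mul_smul, ← h, smul_smul, inv_mul_cancel₀ (sub_ne_zero.2 hne), one_smul]
    subst hrs
    rw [smul_add] at hr
    have h2 : t • g u = s • g u := add_right_cancel hr
    have h3 : t = s := smul_left_injective F (hgne u hu hu0) h2
    rw [hs, h3]
  have he1H : e1 ∈ H := (hHm _).2 he1
  have he2H : e2 ∈ H := (hHm _).2 he2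
  choose t ht using hsc e1 he1H
  have ht' : ∀ v ∈ H, ∀ a, g (a • v) = t a • g v := by
    intro v hv a
    by_cases hve : v ∈ span F {e1}
    swap
    · exact hsame e1 he1H v hv he10 hve a _ (ht a)
    have h2 := hsame e1 he1H e2 he2H he10 he12 a _ (ht a)
    by_cases hv0' : v = 0
    · subst hv0'; simp [hg0]
    refine hsame e2 he2H v hv (fun h => he12 (by rw [h]; exact zero_mem _)) ?_ a _ h2
    intro h
    apply he12
    obtain ⟨c, rfl⟩ := mem_span_singleton.1 hve
    obtain ⟨d, hd⟩ := mem_span_singleton.1 h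
    have hd0 : d ≠ 0 := by rintro rfl; simp at hd; simp [hd] at hv0'
    rw [mem_span_singleton]
    refine ⟨d⁻¹ * c, ?_⟩
    rw [mul_smul, ← hd, smul_smul, inv_mul_cancel₀ hd0, one_smul]
  have hinj : Function.Injective (fun a : F => a • g e1) :=
    smul_left_injective F (hgne e1 he1H he10)
  let τ : F →+* F :=
    { toFun := t
      map_one' := hinj (by simp only; rw [← ht]; simp)
      map_zero' := hinj (by simp only; rw [← ht]; simp [hg0])
      map_mul' := fun a b => hinj (by
        simp only
        rw [← ht, mul_smul, ht' _ (H.smul_mem b he1H), ht, smul_smul])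
      map_add' := fun a b => hinj (by
        simp only
        rw [← ht, add_smul, hadd _ (H.smul_mem a he1H) _ (H.smul_mem b he1H), ht, ht, add_smul]) }
  have hτ : ∀ v ∈ H, ∀ a, g (a • v) = τ a • g v := ht'
  have hproj : ∀ x, x - l x • v0 ∈ H := by
    intro x; rw [hHm]; simp [hv0]
  refine ⟨fun x => τ (l x) • w0 + g (x - l x • v0), τ, ?_, ?_, ?_⟩
  · intro x y
    have : x + y - l (x + y) • v0 = (x - l x • v0) + (y - l y • v0) := by
      rw [map_add]; module
    simp only
    rw [this, hadd _ (hproj x) _ (hproj y), map_add, map_add]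
    module
  · intro c x
    have : c • x - l (c • x) • v0 = c • (x - l x • v0) := by
      rw [map_smul, smul_eq_mul]; module
    simp only
    rw [this, hτ _ (hproj x), map_smul, smul_eq_mul, map_mul]
    module
  · intro x
    simp only
    by_cases hx : l x = 0
    · rw [hx]
      simpa using hgs x ((hHm x).2 hx)
    · have hux : IsUnit (l x) := IsUnit.mk0 _ hx
      have hyH : (l x)⁻¹ • (x - l x • v0) ∈ H := H.smul_mem _ (hproj x)
      have h1 : x = l x • (v0 + (l x)⁻¹ • (x - l x • v0)) := by
        rw [smul_add, smul_smul, mul_inv_cancel₀ hx]; module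
      have h2 : τ (l x) • w0 + g (x - l x • v0)
          = τ (l x) • (w0 + g ((l x)⁻¹ • (x - l x • v0))) := by
        rw [smul_add, ← hτ _ hyH, smul_smul, mul_inv_cancel₀ hx, one_smul]
      rw [h2, span_singleton_smul_eq (hux.map τ), ← (hg _ hyH).2,
        ← span_singleton_smul_eq hux (v0 + _), ← h1]

/-- Row space of a matrix. -/
def auxRow {n : ℕ} {F : Type*} [Field F] (X : Matrix (Fin n) (Fin n) F) :
    Submodule F (Fin n → F) := Submodule.span F (Set.range X.row)

theorem auxRow_mem {n : ℕ} {F : Type*} [Field F] (X : Matrix (Fin n) (Fin n) F) (v : Fin n → F) :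
    v ∈ auxRow X ↔ ∃ c, Matrix.vecMul c X = v := by
  rw [auxRow, ← range_vecMulLinear]; rfl

theorem aux_leftIdeal_le {n : ℕ} {F : Type*} [Field F] (X Y : Matrix (Fin n) (Fin n) F) :
    leftIdeal X ⊆ leftIdeal Y ↔ auxRow X ≤ auxRow Y := by
  constructor
  · intro h
    obtain ⟨C, hC⟩ := h ⟨1, (Matrix.one_mul X).symm⟩
    intro v hv
    rw [auxRow_mem] at hv ⊢
    obtain ⟨c, rfl⟩ := hv
    exact ⟨Matrix.vecMul c C, by rw [Matrix.vecMul_vecMul, ← hC]⟩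
  · intro h
    have h1 : ∀ i, ∃ c, Matrix.vecMul c Y = X.row i := fun i =>
      (auxRow_mem Y _).1 (h (Submodule.subset_span ⟨i, rfl⟩))
    choose C hC using h1
    rintro A ⟨D, rfl⟩
    refine ⟨D * Matrix.of C, ?_⟩
    rw [Matrix.mul_assoc]
    congr 1
    ext i j
    exact (congrFun (hC i) j).symm

theorem aux_leftIdeal_lt {n : ℕ} {F : Type*} [Field F] (X Y : Matrix (Fin n) (Fin n) F) :
    leftIdeal X ⊂ leftIdeal Y ↔ auxRow X < auxRow Y := by
  rw [lt_iff_le_not_ge (a := auxRow X), ← aux_leftIdeal_le, ← aux_leftIdeal_le]; rfl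

theorem aux_leftIdeal_eq {n : ℕ} {F : Type*} [Field F] (X Y : Matrix (Fin n) (Fin n) F) :
    leftIdeal X = leftIdeal Y ↔ auxRow X = auxRow Y := by
  rw [le_antisymm_iff (a := auxRow X), ← aux_leftIdeal_le, ← aux_leftIdeal_le]; exact Set.Subset.antisymm_iff

theorem auxRow_surj {n : ℕ} {F : Type*} [Field F] (U : Submodule F (Fin n → F)) :
    ∃ X : Matrix (Fin n) (Fin n) F, auxRow X = U := by
  obtain ⟨W, hW⟩ := U.exists_isCompl
  obtain ⟨p, hp⟩ := LinearMap.exists_leftInverse_of_injective U.subtype (by simp)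
  refine ⟨(LinearMap.toMatrix' (U.subtype ∘ₗ p)).transpose, ?_⟩
  ext v
  rw [auxRow_mem]
  constructor
  · rintro ⟨c, rfl⟩
    rw [Matrix.vecMul_transpose, LinearMap.toMatrix'_mulVec]
    exact (p c).2
  · intro hv
    refine ⟨v, ?_⟩
    rw [Matrix.vecMul_transpose, LinearMap.toMatrix'_mulVec]
    have := LinearMap.congr_fun hp ⟨v, hv⟩
    simp at this
    simp [this]

theorem aux_h3 {n : ℕ} (hn : 3 ≤ n) {F : Type*} [Field F] (x y : Fin n → F) :
    ∃ z, z ∉ Submodule.span F {x, y} := by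
  by_contra! h
  have htop : Submodule.span F {x, y} = ⊤ := by
    rw [eq_top_iff]; intro z _; exact h z
  have h1 : Module.finrank F (Submodule.span F ({x, y} : Set (Fin n → F))) ≤ 2 := by
    classical
    have := finrank_span_finset_le_card (R := F) ({x, y} : Finset (Fin n → F))
    have h2 := Finset.card_le_two (a := x) (b := y)
    rw [Finset.coe_pair] at this
    exact this.trans h2
  rw [htop, finrank_top, Module.finrank_fin_fun] at h1
  omega

/-- Main theorem: for `n ≥ 3`, every automorphism `Ψ` of the left-ideal relation
digraph of `M_n(F_q)` decomposes as `Ψ(X) = (τ applied entrywise to σ(X)) * P`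
where `P` is invertible, `τ` is a field automorphism of `F_q`, and `σ` is a
bijection preserving each left ideal `[X]`. -/
theorem stmt_15 {n : ℕ} (hn : 3 ≤ n) {F : Type*} [Field F] [Fintype F]
    (Ψ : Matrix (Fin n) (Fin n) F → Matrix (Fin n) (Fin n) F)
    (hbij : Function.Bijective Ψ)
    (hedge : ∀ X Y : Matrix (Fin n) (Fin n) F,
      leftIdeal X ⊂ leftIdeal Y ↔ leftIdeal (Ψ X) ⊂ leftIdeal (Ψ Y)) :
    ∃ (P : Matrix (Fin n) (Fin n) F) (τ : F ≃+* F)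
      (σ : Matrix (Fin n) (Fin n) F → Matrix (Fin n) (Fin n) F),
      IsUnit P ∧ Function.Bijective σ ∧
      (∀ X : Matrix (Fin n) (Fin n) F, leftIdeal (σ X) = leftIdeal X) ∧
      (∀ X : Matrix (Fin n) (Fin n) F, Ψ X = (σ X).map (τ : F → F) * P) ∧
      (∀ X : Matrix (Fin n) (Fin n) F,
        leftIdeal (Ψ X) = leftIdeal (X.map (τ : F → F) * P)) := by
  have h3 := fun x y : Fin n → F => aux_h3 hn x y
  have hlt : ∀ X Y, auxRow X < auxRow Y ↔ auxRow (Ψ X) < auxRow (Ψ Y) := by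
    intro X Y
    rw [← aux_leftIdeal_lt, ← aux_leftIdeal_lt]; exact hedge X Y
  have heq : ∀ X Y, auxRow X = auxRow Y ↔ auxRow (Ψ X) = auxRow (Ψ Y) := by
    intro X Y
    constructor
    · intro h
      apply aux_eq_of_nbhd h3
      · intro T
        obtain ⟨Z, rfl⟩ := auxRow_surj T
        obtain ⟨Z, rfl⟩ := hbij.2 Z
        rw [← hlt, ← hlt, h]
      · intro T
        obtain ⟨Z, rfl⟩ := auxRow_surj T
        obtain ⟨Z, rfl⟩ := hbij.2 Z
        rw [← hlt, ← hlt, h]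
    · intro h
      apply aux_eq_of_nbhd h3
      · intro T
        obtain ⟨Z, rfl⟩ := auxRow_surj T
        rw [hlt _ X, hlt _ Y, h]
      · intro T
        obtain ⟨Z, rfl⟩ := auxRow_surj T
        rw [hlt X, hlt Y, h]
  choose S hS using fun U : Submodule F (Fin n → F) => auxRow_surj U
  let e := Equiv.ofBijective Ψ hbij
  have he : ∀ X, Ψ (e.symm X) = X := fun X => e.apply_symm_apply X
  let φ : Submodule F (Fin n → F) ≃o Submodule F (Fin n → F) :=
    { toFun := fun U => auxRow (Ψ (S U))
      invFun := fun U => auxRow (e.symm (S U))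
      left_inv := fun U => by
        refine Eq.trans ?_ (hS U)
        simp only
        rw [heq, he, hS]
      right_inv := fun U => by
        refine Eq.trans ?_ (hS U)
        simp only
        rw [← he (S U), ← heq, hS, he]
      map_rel_iff' := by
        intro U W
        simp only [Equiv.coe_fn_mk]
        rw [le_iff_lt_or_eq, ← hlt, ← heq, ← le_iff_lt_or_eq, hS, hS] }
  have hφ : ∀ X, φ (auxRow X) = auxRow (Ψ X) := by
    intro X
    change auxRow (Ψ (S (auxRow X))) = _
    rw [← heq, hS]
  have i01 : (⟨0, by omega⟩ : Fin n) ≠ ⟨1, by omega⟩ := by simp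
  have i02 : (⟨0, by omega⟩ : Fin n) ≠ ⟨2, by omega⟩ := by simp
  have i12 : (⟨1, by omega⟩ : Fin n) ≠ ⟨2, by omega⟩ := by simp
  obtain ⟨f, τ, hfadd, hfsmul, hfφ⟩ := aux_ftpg φ (LinearMap.proj ⟨0, by omega⟩)
    (Pi.single ⟨0, by omega⟩ 1) (Pi.single ⟨1, by omega⟩ 1) (Pi.single ⟨2, by omega⟩ 1)
    (by simp) (by simp [i01]) (by simp [i02]) (by simp) (by
      rw [Submodule.mem_span_singleton]
      rintro ⟨c, hc⟩
      have := congrFun hc ⟨2, by omega⟩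
      simp [i12.symm] at this)
  have hτb : Function.Bijective τ := Finite.injective_iff_bijective.1 τ.injective
  let τ' : F ≃+* F := RingEquiv.ofBijective τ hτb
  have hτ' : ∀ a, τ' a = τ a := fun a => rfl
  let P : Matrix (Fin n) (Fin n) F := Matrix.of fun i => f (Pi.single i 1)
  have hf0 : f 0 = 0 := by simpa using hfsmul 0 0
  let fa : (Fin n → F) →+ (Fin n → F) := ⟨⟨f, hf0⟩, hfadd⟩
  have hfP : ∀ x, f x = Matrix.vecMul (fun i => τ' (x i)) P := by
    intro x
    have h1 : x = ∑ i, x i • (Pi.single i 1 : Fin n → F) := by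
      ext j; simp [Finset.sum_apply, Pi.single_apply]
    have h2 : fa x = ∑ i, fa (x i • (Pi.single i 1 : Fin n → F)) := by
      conv_lhs => rw [h1]
      rw [map_sum]
    have h4 : f x = ∑ i, f (x i • (Pi.single i 1 : Fin n → F)) := h2
    rw [h4, Matrix.vecMul_eq_sum]
    refine Finset.sum_congr rfl fun i _ => ?_
    rw [hfsmul]; rfl
  have hfinj : ∀ x, f x = 0 → x = 0 := by
    intro x hx
    have h := hfφ x
    rw [hx] at h
    simpa using h
  have hP : IsUnit P := by
    rw [← Matrix.vecMul_injective_iff_isUnit]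
    have : Function.Injective P.vecMulLinear := by
      rw [injective_iff_map_eq_zero]
      intro y hy
      have h := hfinj (fun i => τ'.symm (y i)) (by
        rw [hfP]; simpa using hy)
      ext i
      simpa using congrFun h i
    exact this
  have hrow : ∀ X : Matrix (Fin n) (Fin n) F,
      φ (auxRow X) = auxRow (X.map (τ' : F → F) * P) := by
    intro X
    unfold auxRow
    rw [Submodule.span_range_eq_iSup, Submodule.span_range_eq_iSup, φ.map_iSup]
    congr 1
    ext1 i
    rw [hfφ, hfP]
    rfl
  have hlast : ∀ X : Matrix (Fin n) (Fin n) F,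
      leftIdeal (Ψ X) = leftIdeal (X.map (τ' : F → F) * P) := by
    intro X
    rw [aux_leftIdeal_eq, ← hφ, hrow]
  have hdet : IsUnit P.det := (Matrix.isUnit_iff_isUnit_det P).1 hP
  let σ : Matrix (Fin n) (Fin n) F → Matrix (Fin n) (Fin n) F :=
    fun X => (Ψ X * P⁻¹).map τ'.symm
  have hσ : ∀ X, Ψ X = (σ X).map (τ' : F → F) * P := by
    intro X
    have : (σ X).map (τ' : F → F) = Ψ X * P⁻¹ := by
      ext i j; exact τ'.apply_symm_apply _
    rw [this, Matrix.mul_assoc, Matrix.nonsing_inv_mul _ hdet, Matrix.mul_one]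
  refine ⟨P, τ', σ, hP, ?_, ?_, hσ, hlast⟩
  · apply Finite.injective_iff_bijective.1
    intro X Y h
    apply hbij.1
    rw [hσ X, hσ Y, h]
  · intro X
    rw [aux_leftIdeal_eq]
    apply φ.injective
    rw [hrow, ← hσ, hφ]
end
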